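/- There exists a positive constant c, independent of p, such that for every integer p ≥ 0 the smallest eigenvalue λ_p of the generalized eigenvalue problem λ ∫_{−1}^{1} (I φ)'(I v)' ds = ∫_{−1}^{1} φ v ds (for all v ∈ P_p) satisfies λ_p ≥ c (p+1)^{−4}. -/

import Mathlib

open Polynomial

/-- The `k`-th Legendre polynomial (Rodrigues' formula), normalized so that `L_k(1) = 1`
and `∫_{−1}^{1} L_k L_j ds = 2δ_{kj}/(2k+1)`. -/
noncomputable def legendre (k : ℕ) : Polynomial ℝ :=
  ((2 ^ k * (Nat.factorial k) : ℝ))⁻¹ •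
    ((fun q => Polynomial.derivative q)^[k] ((Polynomial.X ^ 2 - 1) ^ k))

/-- The reconstruction operator `I : P_p → P_{p+1}`,
`I v := v − v(−1)·(−1)^p (L_p − L_{p+1})/2`. -/
noncomputable def recon (p : ℕ) (v : Polynomial ℝ) : Polynomial ℝ :=
  v - (v.eval (-1) * (-1 : ℝ) ^ p / 2) • (legendre p - legendre (p + 1))

/-!
An eigenvalue is the Rayleigh quotient `‖φ‖² / ‖(I φ)'‖²` of its eigenfunction, so it suffices that
`‖(I v)'‖² ≤ 3 (p + 1)⁴ ‖v‖²` for `v ∈ P_p`. Expanding `v` in Legendre polynomials, the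
Cauchy–Schwarz inequality gives `v(-1)² ≤ (p + 1)² / 2 * ‖v‖²`. By parts, the coefficients
`⟪L_k', L_j⟫`, `j < k`, equal `1 - (-1)^(k+j)`, whence `‖L_k'‖² ≤ 2 k²`, and bounding `v'` through
the expansion of `v` yields the Markov inequality `‖v'‖² ≤ (p + 1)⁴ / 2 * ‖v‖²`. The correction
`I v - v` is a multiple of `L_p - L_{p+1}` of size `|v(-1)| / 2`, so the two bounds control it.
-/

section OrthogonalExpansion

variable {ι 𝕜 E F : Type*} [Field 𝕜] [AddCommGroup E] [Module 𝕜 E]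
  {B : LinearMap.BilinForm 𝕜 E} {e : ι → E} {s : Finset ι} {v : E}

lemma eq_sum_smul_of_iIsOrtho (hortho : B.iIsOrtho e) (hne : ∀ i, B (e i) (e i) ≠ 0)
    (hv : v ∈ Submodule.span 𝕜 (e '' s)) :
    v = ∑ i ∈ s, (B v (e i) / B (e i) (e i)) • e i := by
  classical
  obtain ⟨a, rfl⟩ := Submodule.mem_span_image_finset_iff_exists_fun' 𝕜 |>.1 hv
  refine Finset.sum_congr rfl fun i hi => ?_
  have hcoeff : B (∑ j ∈ s, a j • e j) (e i) = a i * B (e i) (e i) := by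
    rw [map_sum, LinearMap.sum_apply, Finset.sum_eq_single_of_mem i hi fun j _ hji => ?_]
    · rw [map_smul, LinearMap.smul_apply, smul_eq_mul]
    · rw [map_smul, LinearMap.smul_apply, LinearMap.BilinForm.iIsOrtho_def.1 hortho j i hji,
        smul_zero]
  rw [hcoeff, mul_div_cancel_right₀ _ (hne i)]

lemma apply_self_eq_sum_of_iIsOrtho (hortho : B.iIsOrtho e) (hne : ∀ i, B (e i) (e i) ≠ 0)
    (hv : v ∈ Submodule.span 𝕜 (e '' s)) :
    B v v = ∑ i ∈ s, B v (e i) ^ 2 / B (e i) (e i) := by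
  calc B v v = B v (∑ i ∈ s, (B v (e i) / B (e i) (e i)) • e i) :=
        congrArg (B v) (eq_sum_smul_of_iIsOrtho hortho hne hv)
    _ = ∑ i ∈ s, B v (e i) ^ 2 / B (e i) (e i) := by
        simp only [map_sum, map_smul, smul_eq_mul, div_mul_eq_mul_div, sq]

variable [LinearOrder 𝕜] [IsStrictOrderedRing 𝕜]

lemma sq_apply_le_of_iIsOrtho (hortho : B.iIsOrtho e) (hpos : ∀ i, 0 < B (e i) (e i))
    (l : E →ₗ[𝕜] 𝕜) (hv : v ∈ Submodule.span 𝕜 (e '' s)) :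
    l v ^ 2 ≤ B v v * ∑ i ∈ s, l (e i) ^ 2 / B (e i) (e i) := by
  have hne i := (hpos i).ne'
  have hlv : l v = ∑ i ∈ s, B v (e i) / B (e i) (e i) * l (e i) := by
    simpa only [map_sum, map_smul, smul_eq_mul] using
      congrArg l (eq_sum_smul_of_iIsOrtho hortho hne hv)
  rw [hlv, apply_self_eq_sum_of_iIsOrtho hortho hne hv]
  refine Finset.sum_sq_le_sum_mul_sum_of_sq_le_mul s
    (fun i _ => div_nonneg (sq_nonneg _) (hpos i).le)
    (fun i _ => div_nonneg (sq_nonneg _) (hpos i).le) fun i _ => le_of_eq ?_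
  ring

variable [AddCommGroup F] [Module 𝕜 F] {Q : LinearMap.BilinForm 𝕜 F}

/-- The functional bound for `Q (T v) ∘ T`, combined with the Cauchy–Schwarz inequality for `Q`,
gives the claim multiplied by `Q (T v) (T v)`. -/
lemma apply_map_self_le_of_iIsOrtho (hortho : B.iIsOrtho e) (hpos : ∀ i, 0 < B (e i) (e i))
    (hQ : Q.IsPosSemidef) (T : E →ₗ[𝕜] F) (hv : v ∈ Submodule.span 𝕜 (e '' s)) :
    Q (T v) (T v) ≤ B v v * ∑ i ∈ s, Q (T (e i)) (T (e i)) / B (e i) (e i) := by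
  have hB : 0 ≤ B v v := by
    rw [apply_self_eq_sum_of_iIsOrtho hortho (fun i => (hpos i).ne') hv]
    exact Finset.sum_nonneg fun i _ => div_nonneg (sq_nonneg _) (hpos i).le
  have hS : 0 ≤ ∑ i ∈ s, Q (T (e i)) (T (e i)) / B (e i) (e i) :=
    Finset.sum_nonneg fun i _ => div_nonneg (hQ.nonneg _) (hpos i).le
  have hmul : Q (T v) (T v) * Q (T v) (T v) ≤
      Q (T v) (T v) * (B v v * ∑ i ∈ s, Q (T (e i)) (T (e i)) / B (e i) (e i)) := by
    calc Q (T v) (T v) * Q (T v) (T v)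
        ≤ B v v * ∑ i ∈ s, Q (T v) (T (e i)) ^ 2 / B (e i) (e i) := by
          simpa only [sq, LinearMap.comp_apply] using
            sq_apply_le_of_iIsOrtho hortho hpos (Q (T v) ∘ₗ T) hv
      _ ≤ B v v * ∑ i ∈ s, Q (T v) (T v) * Q (T (e i)) (T (e i)) / B (e i) (e i) := by
          gcongr with i
          · exact (hpos i).le
          · exact LinearMap.BilinForm.apply_sq_le_of_symm Q hQ.nonneg
              (LinearMap.BilinForm.isSymm_iff.1 hQ.isSymm) _ _
      _ = _ := by simp only [mul_div_assoc, ← Finset.mul_sum, mul_left_comm]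
  rcases (hQ.nonneg (T v)).eq_or_lt with h0 | h0
  · rw [← h0]
    positivity
  · exact le_of_mul_le_mul_left hmul h0

lemma apply_sub_self_le_two_mul_add (hQ : Q.IsNonneg) (x y : F) :
    Q (x - y) (x - y) ≤ 2 * Q x x + 2 * Q y y := by
  have hadd := hQ.nonneg (x + y)
  simp only [map_add, map_sub, LinearMap.add_apply, LinearMap.sub_apply] at hadd ⊢
  linarith

end OrthogonalExpansion

section PolyL2

variable {a b : ℝ}

/-- The `L²(a, b)` inner product `∫ₐᵇ f g` of real polynomials. It is the bilinear form behind both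
sides of the eigenvalue problem. -/
noncomputable def polyL2 (a b : ℝ) : LinearMap.BilinForm ℝ ℝ[X] :=
  LinearMap.mk₂ ℝ (fun f g => ∫ s in a..b, f.eval s * g.eval s)
    (fun f₁ f₂ g => by
      simp only [eval_add, add_mul]
      exact intervalIntegral.integral_add
        ((f₁.continuous.mul g.continuous).intervalIntegrable _ _)
        ((f₂.continuous.mul g.continuous).intervalIntegrable _ _))
    (fun c f g => by
      simp only [eval_smul, smul_eq_mul, mul_assoc, intervalIntegral.integral_const_mul])
    (fun f g₁ g₂ => by
      simp only [eval_add, mul_add]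
      exact intervalIntegral.integral_add
        ((f.continuous.mul g₁.continuous).intervalIntegrable _ _)
        ((f.continuous.mul g₂.continuous).intervalIntegrable _ _))
    (fun c f g => by
      simp only [eval_smul, smul_eq_mul, mul_left_comm _ c, intervalIntegral.integral_const_mul])

lemma polyL2_apply (f g : ℝ[X]) : polyL2 a b f g = ∫ s in a..b, f.eval s * g.eval s := rfl

lemma polyL2_comm (f g : ℝ[X]) : polyL2 a b f g = polyL2 a b g f := by
  simp only [polyL2_apply, mul_comm]

lemma polyL2_isPosSemidef (hab : a ≤ b) : (polyL2 a b).IsPosSemidef where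
  eq := polyL2_comm
  nonneg _ := intervalIntegral.integral_nonneg hab fun _ _ => mul_self_nonneg _

lemma polyL2_self_pos (hab : a < b) {f : ℝ[X]} (hf : f ≠ 0) : 0 < polyL2 a b f f := by
  obtain ⟨x, hx, hfx⟩ : ∃ x ∈ Set.Icc a b, f.eval x ≠ 0 := by
    by_contra! hzero
    exact hf (f.eq_zero_of_infinite_isRoot ((Set.Icc_infinite hab).mono hzero))
  exact intervalIntegral.integral_pos hab (f.continuous.mul f.continuous).continuousOn
    (fun _ _ => mul_self_nonneg _) ⟨x, hx, mul_self_pos.2 hfx⟩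

lemma polyL2_mul_left (f g h : ℝ[X]) : polyL2 a b (f * g) h = polyL2 a b g (f * h) := by
  simp only [polyL2_apply, eval_mul, mul_left_comm, mul_assoc]

lemma polyL2_derivative_left (f g : ℝ[X]) :
    polyL2 a b (derivative f) g =
      f.eval b * g.eval b - f.eval a * g.eval a - polyL2 a b f (derivative g) := by
  have hparts : ∫ s in a..b, ((derivative f).eval s * g.eval s + f.eval s * (derivative g).eval s) =
      f.eval b * g.eval b - f.eval a * g.eval a :=
    intervalIntegral.integral_deriv_mul_eq_sub
      (fun x _ => f.hasDerivAt x) (fun x _ => g.hasDerivAt x)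
      ((derivative f).continuous.intervalIntegrable a b)
      ((derivative g).continuous.intervalIntegrable a b)
  have hsum : ∫ s in a..b, ((derivative f).eval s * g.eval s + f.eval s * (derivative g).eval s) =
      polyL2 a b (derivative f) g + polyL2 a b f (derivative g) :=
    intervalIntegral.integral_add
      (((derivative f).continuous.mul g.continuous).intervalIntegrable _ _)
      ((f.continuous.mul (derivative g).continuous).intervalIntegrable _ _)
  exact eq_sub_of_add_eq (hsum.symm.trans hparts)

lemma polyL2_iterate_derivative_left {f : ℝ[X]} {k : ℕ}
    (ha : ∀ j < k, (derivative^[j] f).eval a = 0) (hb : ∀ j < k, (derivative^[j] f).eval b = 0)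
    (g : ℝ[X]) :
    polyL2 a b (derivative^[k] f) g = (-1) ^ k * polyL2 a b f (derivative^[k] g) := by
  induction k generalizing g with
  | zero => simp only [Function.iterate_zero, id_eq, pow_zero, one_mul]
  | succ k ih =>
    rw [Function.iterate_succ_apply', polyL2_derivative_left, ha k k.lt_succ_self,
      hb k k.lt_succ_self, ih (fun j hj => ha j (hj.trans k.lt_succ_self))
        (fun j hj => hb j (hj.trans k.lt_succ_self)), Function.iterate_succ_apply]
    ring

end PolyL2

local notation "⟪" f "," g "⟫" => polyL2 (-1) 1 f g

section Legendre

lemma polyL2_neg_one_one_isPosSemidef : (polyL2 (-1) 1).IsPosSemidef :=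
  polyL2_isPosSemidef (by norm_num)

lemma legendre_eq_smul_iterate_derivative (k : ℕ) :
    legendre k = (2 ^ k * k.factorial : ℝ)⁻¹ • derivative^[k] ((X ^ 2 - 1) ^ k) := rfl

lemma natDegree_legendre_le (k : ℕ) : (legendre k).natDegree ≤ k := by
  have hpow : ((X ^ 2 - 1 : ℝ[X]) ^ k).natDegree ≤ k * 2 :=
    natDegree_pow_le_of_le k (by compute_degree)
  calc (legendre k).natDegree ≤ ((X ^ 2 - 1 : ℝ[X]) ^ k).natDegree - k :=
        (natDegree_smul_le _ _).trans (natDegree_iterate_derivative _ k)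
    _ ≤ k := by omega

lemma eval_legendre_of_sq_eq_one {r : ℝ} (hr : r ^ 2 = 1) (k : ℕ) :
    (legendre k).eval r = r ^ k := by
  have hfactor : (X ^ 2 - 1 : ℝ[X]) = (X - C r) * (X + C r) := by
    rw [mul_comm, ← sq_sub_sq, ← C_pow, hr, C_1]
  have hderiv : (derivative^[k] ((X ^ 2 - 1 : ℝ[X]) ^ k)).eval r = k.factorial * (2 * r) ^ k := by
    rw [← coe_aeval_eq_eval, aeval_iterate_derivative_self (p' := (X + C r) ^ k)]
    · simp only [eval_pow, eval_add, eval_X, eval_C, nsmul_eq_mul, two_mul]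
    · rw [Algebra.algebraMap_self, Polynomial.map_id, hfactor, mul_pow]
  have hfact : (k.factorial : ℝ) ≠ 0 := mod_cast k.factorial_ne_zero
  rw [legendre_eq_smul_iterate_derivative, eval_smul, smul_eq_mul, hderiv, mul_pow]
  field_simp

lemma sq_eval_legendre {r : ℝ} (hr : r ^ 2 = 1) (k : ℕ) : (legendre k).eval r ^ 2 = 1 := by
  rw [eval_legendre_of_sq_eq_one hr, pow_right_comm, hr, one_pow]

lemma polyL2_legendre_eq_zero {k : ℕ} {q : ℝ[X]} (hq : q.degree < k) : ⟪legendre k, q⟫ = 0 := by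
  have hboundary {r : ℝ} (hr : r ^ 2 = 1) (j : ℕ) (hj : j < k) :
      (derivative^[j] ((X ^ 2 - 1 : ℝ[X]) ^ k)).eval r = 0 := by
    refine eval_eq_zero_of_dvd_of_eval_eq_zero (pow_sub_dvd_iterate_derivative_pow _ k j) ?_
    simp [hr, Nat.sub_ne_zero_of_lt hj]
  have hparts := polyL2_iterate_derivative_left
    (hboundary (r := -1) (by norm_num)) (hboundary (r := 1) (by norm_num)) q
  rw [iterate_derivative_eq_zero_of_degree_lt hq, map_zero, mul_zero] at hparts
  rw [legendre_eq_smul_iterate_derivative, map_smul, LinearMap.smul_apply, hparts, smul_zero]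

lemma legendre_ne_zero (k : ℕ) : legendre k ≠ 0 := by
  intro h
  simpa [h] using eval_legendre_of_sq_eq_one (one_pow 2) k

lemma polyL2_legendre_self_pos (k : ℕ) : 0 < ⟪legendre k, legendre k⟫ :=
  polyL2_self_pos (by norm_num) (legendre_ne_zero k)

lemma degree_legendre (k : ℕ) : (legendre k).degree = k := by
  refine (degree_le_of_natDegree_le (natDegree_legendre_le k)).eq_of_not_lt fun hlt => ?_
  exact (polyL2_legendre_self_pos k).ne' (polyL2_legendre_eq_zero hlt)

lemma iIsOrtho_legendre : (polyL2 (-1) 1).iIsOrtho legendre := by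
  have hlt {j k : ℕ} (hjk : j < k) : ⟪legendre k, legendre j⟫ = 0 :=
    polyL2_legendre_eq_zero (by rw [degree_legendre]; exact mod_cast hjk)
  refine LinearMap.BilinForm.iIsOrtho_def.2 fun j k hjk => ?_
  rcases hjk.lt_or_gt with h | h
  · exact (polyL2_comm _ _).trans (hlt h)
  · exact hlt h

lemma mem_span_legendre {v : ℝ[X]} {n : ℕ} (hv : v.degree < n) :
    v ∈ Submodule.span ℝ (legendre '' (Finset.range n : Finset ℕ)) := by
  let S : Polynomial.Sequence ℝ := ⟨legendre, degree_legendre⟩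
  have hspan := S.span_degreeLT (m := n) fun k _ =>
    (leadingCoeff_ne_zero.2 (S.ne_zero k)).isUnit
  rw [Finset.coe_range]
  exact hspan.ge (mem_degreeLT.2 hv)

lemma degree_X_mul_derivative_sub_smul_lt {R : Type*} [CommRing R] {f : R[X]} {k : ℕ}
    (hf : f.natDegree ≤ k) : (X * derivative f - (k : R) • f).degree < (k : WithBot ℕ) := by
  refine (degree_lt_iff_coeff_zero _ k).2 fun m hm => ?_
  have hcoeff : (X * derivative f).coeff m = m * f.coeff m := by
    cases m with
    | zero => simp
    | succ m => rw [coeff_X_mul, coeff_derivative, mul_comm, Nat.cast_succ]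
  rw [coeff_sub, hcoeff, coeff_smul, smul_eq_mul, ← sub_mul]
  rcases hm.eq_or_lt with rfl | hlt
  · rw [sub_self, zero_mul]
  · rw [coeff_eq_zero_of_natDegree_lt (hf.trans_lt hlt), mul_zero]

/-- By parts, since `X L_k'` is `k L_k` modulo lower degree, to which `L_k` is orthogonal. -/
lemma polyL2_legendre_self (k : ℕ) : ⟪legendre k, legendre k⟫ = 2 / (2 * k + 1) := by
  have hXderiv : ⟪legendre k, X * derivative (legendre k)⟫ = k * ⟪legendre k, legendre k⟫ := by
    have horth := polyL2_legendre_eq_zero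
      (degree_X_mul_derivative_sub_smul_lt (natDegree_legendre_le k))
    rwa [map_sub, map_smul, smul_eq_mul, sub_eq_zero] at horth
  have hparts : ⟪legendre k, X * derivative (legendre k)⟫ =
      2 - (⟪legendre k, legendre k⟫ + ⟪legendre k, X * derivative (legendre k)⟫) := by
    calc ⟪legendre k, X * derivative (legendre k)⟫
        = ⟪derivative (legendre k), X * legendre k⟫ := by rw [polyL2_comm, polyL2_mul_left]
      _ = (legendre k).eval 1 ^ 2 + (legendre k).eval (-1) ^ 2
            - ⟪legendre k, derivative (X * legendre k)⟫ := by
          rw [polyL2_derivative_left, eval_mul, eval_mul, eval_X, eval_X]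
          ring
      _ = _ := by
          rw [sq_eval_legendre (one_pow 2), sq_eval_legendre neg_one_sq, derivative_mul,
            derivative_X, one_mul, map_add]
          norm_num
  rw [eq_div_iff (by positivity)]
  linarith

lemma sq_apply_le_of_degree_lt (l : ℝ[X] →ₗ[ℝ] ℝ) {v : ℝ[X]} {n : ℕ} (hv : v.degree < n) :
    l v ^ 2 ≤ ⟪v, v⟫ * ∑ k ∈ Finset.range n, l (legendre k) ^ 2 * ((2 * k + 1) / 2) := by
  simpa only [polyL2_legendre_self, div_div_eq_mul_div, mul_div_assoc] using
    sq_apply_le_of_iIsOrtho iIsOrtho_legendre polyL2_legendre_self_pos l (mem_span_legendre hv)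

lemma sum_range_two_mul_add_one {R : Type*} [CommSemiring R] (n : ℕ) :
    ∑ k ∈ Finset.range n, (2 * k + 1 : R) = n ^ 2 := by
  induction n with
  | zero => simp
  | succ n ih =>
    rw [Finset.sum_range_succ, ih]
    push_cast
    ring

lemma sq_eval_le_of_degree_lt {r : ℝ} (hr : r ^ 2 = 1) {v : ℝ[X]} {n : ℕ} (hv : v.degree < n) :
    v.eval r ^ 2 ≤ ⟪v, v⟫ * (n ^ 2 / 2) := by
  simpa only [leval_apply, sq_eval_legendre hr, one_mul, ← Finset.sum_div,
    sum_range_two_mul_add_one] using sq_apply_le_of_degree_lt (leval r) hv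

lemma degree_derivative_legendre_lt (k : ℕ) : (derivative (legendre k)).degree < k :=
  (degree_derivative_lt (legendre_ne_zero k)).trans_eq (degree_legendre k)

lemma polyL2_derivative_legendre_of_lt {j k : ℕ} (hjk : j < k) :
    ⟪derivative (legendre k), legendre j⟫ = 1 - (-1) ^ (k + j) := by
  have hdegree : (derivative (legendre j)).degree < k :=
    (degree_derivative_legendre_lt j).trans (mod_cast hjk)
  rw [polyL2_derivative_left, polyL2_legendre_eq_zero hdegree]
  simp only [eval_legendre_of_sq_eq_one (one_pow 2), eval_legendre_of_sq_eq_one neg_one_sq]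
  ring

lemma polyL2_derivative_legendre_self_le (k : ℕ) :
    ⟪derivative (legendre k), derivative (legendre k)⟫ ≤ 2 * k ^ 2 := by
  have hcoeff {j : ℕ} (hj : j < k) :
      ⟪derivative (legendre k), legendre j⟫ ^ 2 ≤ 4 := by
    rw [polyL2_derivative_legendre_of_lt hj]
    rcases neg_one_pow_eq_or ℝ (k + j) with h | h <;> rw [h] <;> norm_num
  calc ⟪derivative (legendre k), derivative (legendre k)⟫
      = ∑ j ∈ Finset.range k,
          ⟪derivative (legendre k), legendre j⟫ ^ 2 / ⟪legendre j, legendre j⟫ :=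
        apply_self_eq_sum_of_iIsOrtho iIsOrtho_legendre (fun j => (polyL2_legendre_self_pos j).ne')
          (mem_span_legendre (degree_derivative_legendre_lt k))
    _ ≤ ∑ j ∈ Finset.range k, 4 / ⟪legendre j, legendre j⟫ := by
        gcongr with j hj
        · exact (polyL2_legendre_self_pos j).le
        · exact hcoeff (Finset.mem_range.1 hj)
    _ = ∑ j ∈ Finset.range k, 2 * (2 * j + 1 : ℝ) := by
        refine Finset.sum_congr rfl fun j _ => ?_
        rw [polyL2_legendre_self]
        field_simp
        norm_num
    _ = 2 * k ^ 2 := by rw [← Finset.mul_sum, sum_range_two_mul_add_one]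

lemma sum_range_sq_mul_two_mul_add_one_le (n : ℕ) :
    ∑ k ∈ Finset.range n, (k : ℝ) ^ 2 * (2 * k + 1) ≤ (n : ℝ) ^ 4 / 2 := by
  induction n with
  | zero => simp
  | succ n ih =>
    rw [Finset.sum_range_succ]
    push_cast
    nlinarith [(n.cast_nonneg : (0 : ℝ) ≤ n)]

lemma polyL2_derivative_self_le {v : ℝ[X]} {n : ℕ} (hv : v.degree < n) :
    ⟪derivative v, derivative v⟫ ≤ ⟪v, v⟫ * (n ^ 4 / 2) := by
  calc ⟪derivative v, derivative v⟫
      ≤ ⟪v, v⟫ * ∑ k ∈ Finset.range n,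
          ⟪derivative (legendre k), derivative (legendre k)⟫ / ⟪legendre k, legendre k⟫ :=
        apply_map_self_le_of_iIsOrtho iIsOrtho_legendre polyL2_legendre_self_pos
          polyL2_neg_one_one_isPosSemidef derivative (mem_span_legendre hv)
    _ ≤ ⟪v, v⟫ * ∑ k ∈ Finset.range n, 2 * (k : ℝ) ^ 2 / ⟪legendre k, legendre k⟫ := by
        gcongr with k
        · exact polyL2_neg_one_one_isPosSemidef.nonneg v
        · exact (polyL2_legendre_self_pos k).le
        · exact polyL2_derivative_legendre_self_le k
    _ = ⟪v, v⟫ * ∑ k ∈ Finset.range n, (k : ℝ) ^ 2 * (2 * k + 1) := by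
        congr 1
        refine Finset.sum_congr rfl fun k _ => ?_
        rw [polyL2_legendre_self]
        field_simp
    _ ≤ ⟪v, v⟫ * (n ^ 4 / 2) := by
        gcongr
        · exact polyL2_neg_one_one_isPosSemidef.nonneg v
        · exact sum_range_sq_mul_two_mul_add_one_le n

end Legendre

section Reconstruction

lemma polyL2_derivative_legendre_sub_legendre_succ_le (p : ℕ) :
    ⟪derivative (legendre p - legendre (p + 1)), derivative (legendre p - legendre (p + 1))⟫ ≤
      8 * ((p : ℝ) + 1) ^ 2 := by
  rw [derivative_sub]
  calc _ ≤ 2 * ⟪derivative (legendre p), derivative (legendre p)⟫ +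
        2 * ⟪derivative (legendre (p + 1)), derivative (legendre (p + 1))⟫ :=
        apply_sub_self_le_two_mul_add polyL2_neg_one_one_isPosSemidef.isNonneg _ _
    _ ≤ 2 * (2 * (p : ℝ) ^ 2) + 2 * (2 * ((p + 1 : ℕ) : ℝ) ^ 2) := by
        gcongr <;> exact polyL2_derivative_legendre_self_le _
    _ ≤ 8 * ((p : ℝ) + 1) ^ 2 := by
        push_cast
        nlinarith [(p.cast_nonneg : (0 : ℝ) ≤ p)]

lemma polyL2_derivative_recon_self_le {p : ℕ} {v : ℝ[X]} (hv : v.natDegree ≤ p) :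
    ⟪derivative (recon p v), derivative (recon p v)⟫ ≤ 3 * ((p : ℝ) + 1) ^ 4 * ⟪v, v⟫ := by
  have hdegree : v.degree < (p + 1 : ℕ) :=
    degree_le_natDegree.trans_lt (mod_cast Nat.lt_succ_of_le hv)
  have hmarkov := polyL2_derivative_self_le hdegree
  have htrace := sq_eval_le_of_degree_lt neg_one_sq hdegree
  set D := derivative (legendre p - legendre (p + 1))
  have hD : ⟪D, D⟫ ≤ 8 * ((p : ℝ) + 1) ^ 2 := polyL2_derivative_legendre_sub_legendre_succ_le p
  set α := v.eval (-1) * (-1 : ℝ) ^ p / 2 with hα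
  have hαsq : α ^ 2 = v.eval (-1) ^ 2 / 4 := by
    rw [hα, div_pow, mul_pow, pow_right_comm, neg_one_sq, one_pow]
    norm_num
  have hrecon : derivative (recon p v) = derivative v - α • D := by
    rw [recon, derivative_sub, derivative_smul]
  push_cast at hmarkov htrace
  calc ⟪derivative (recon p v), derivative (recon p v)⟫
      ≤ 2 * ⟪derivative v, derivative v⟫ + 2 * ⟪α • D, α • D⟫ := by
        rw [hrecon]
        exact apply_sub_self_le_two_mul_add polyL2_neg_one_one_isPosSemidef.isNonneg _ _
    _ = 2 * ⟪derivative v, derivative v⟫ + v.eval (-1) ^ 2 / 2 * ⟪D, D⟫ := by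
        rw [map_smul, map_smul, LinearMap.smul_apply, smul_smul, smul_eq_mul, ← sq, hαsq]
        ring
    _ ≤ 2 * (⟪v, v⟫ * (((p : ℝ) + 1) ^ 4 / 2)) +
        ⟪v, v⟫ * (((p : ℝ) + 1) ^ 2 / 2) / 2 * (8 * ((p : ℝ) + 1) ^ 2) := by
        have hD_nonneg : 0 ≤ ⟪D, D⟫ := polyL2_neg_one_one_isPosSemidef.nonneg D
        have hv_nonneg : 0 ≤ ⟪v, v⟫ := polyL2_neg_one_one_isPosSemidef.nonneg v
        gcongr
    _ = 3 * ((p : ℝ) + 1) ^ 4 * ⟪v, v⟫ := by ring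

end Reconstruction

theorem eigenvalue_lower_bound_general {p : ℕ} {lam : ℝ} {φ : ℝ[X]} (hφ : φ ≠ 0)
    (hdeg : φ.natDegree ≤ p)
    (hlam : lam * (∫ s in (-1 : ℝ)..1,
        (derivative (recon p φ)).eval s * (derivative (recon p φ)).eval s)
      = ∫ s in (-1 : ℝ)..1, φ.eval s * φ.eval s) :
    1 / 3 / ((p : ℝ) + 1) ^ 4 ≤ lam := by
  simp only [← polyL2_apply] at hlam
  set energy := ⟪derivative (recon p φ), derivative (recon p φ)⟫
  have hmass : 0 < lam * energy := hlam ▸ polyL2_self_pos (by norm_num) hφ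
  have henergy : 0 < energy :=
    (polyL2_neg_one_one_isPosSemidef.nonneg _).lt_of_ne' (right_ne_zero_of_mul hmass.ne')
  have hbound : energy ≤ 3 * ((p : ℝ) + 1) ^ 4 * (lam * energy) :=
    hlam ▸ polyL2_derivative_recon_self_le hdeg
  rw [div_le_iff₀ (by positivity)]
  nlinarith

/-- **Lower bound on the smallest eigenvalue.** There is a constant `c > 0`, independent of
`p`, such that for every `p ≥ 0`, the smallest eigenvalue `λ_p` of the generalized eigenvalue
problem `λ ∫_{−1}^{1} (I φ)'(I v)' ds = ∫_{−1}^{1} φ v ds` for all `v ∈ P_p`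
(with eigenfunctions `φ_j ∈ P_p` orthonormalized in the inner product
`(u,v) ↦ ∫_{−1}^{1} (I u)'(I v)' ds`, and eigenvalues ordered decreasingly) satisfies
`λ_p ≥ c (p+1)⁻⁴`. -/
theorem eigenvalue_lower_bound :
    ∃ c : ℝ, 0 < c ∧ ∀ p : ℕ, ∀ lam : Fin (p + 1) → ℝ, ∀ φ : Fin (p + 1) → Polynomial ℝ,
      (∀ j, (φ j).natDegree ≤ p) →
      (∀ j, 0 < lam j) →
      (∀ j k : Fin (p + 1),
        (∫ s in (-1 : ℝ)..1,
            (Polynomial.derivative (recon p (φ j))).eval s *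
              (Polynomial.derivative (recon p (φ k))).eval s)
          = if j = k then 1 else 0) →
      (∀ j : Fin (p + 1), ∀ v : Polynomial ℝ, v.natDegree ≤ p →
        lam j * (∫ s in (-1 : ℝ)..1,
            (Polynomial.derivative (recon p (φ j))).eval s *
              (Polynomial.derivative (recon p v)).eval s)
          = ∫ s in (-1 : ℝ)..1, (φ j).eval s * v.eval s) →
      (∀ j k : Fin (p + 1), j ≤ k → lam k ≤ lam j) →
      c / ((p : ℝ) + 1) ^ 4 ≤ lam (Fin.last p) := by
  refine ⟨1 / 3, by norm_num, fun p lam φ hdeg _ hnorm heig _ => ?_⟩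
  have hφ : φ (Fin.last p) ≠ 0 := fun hzero => by
    simpa [hzero, recon] using hnorm (Fin.last p) (Fin.last p)
  exact eigenvalue_lower_bound_general hφ (hdeg _) (heig _ _ (hdeg _))
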